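/- Robin–Wronskian boundary identity: suppose s₀ > 0 satisfies the free boundary condition tanh(φ(s₀)) = B(s₀)·K/(a·sinh(2s₀)), let r := arcosh(A(s₀)·cosh(φ(s₀))), and let ψ : ℝ → ℝ be a twice continuously differentiable solution of (B·ψ')'(s) + B(s)·(|II|²(s) − 2)·ψ(s) = 0 with ψ(0) = 1/(2·K) and ψ'(0) = 0, where |II|²(s) := 2·(B''(s)/B(s) − 1). Then, with u_*(s) := −a·sinh(2s)/B(s), one has ψ(s₀)·(B(s₀)² − 2·K²)/B(s₀)³ − (ψ'(s₀) − coth(r)·ψ(s₀))·u_*(s₀) = −a/(K·B(s₀)). -/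

import Mathlib

namespace MoriCatenoid

/-- Profile function `B(s) = √(a·cosh(2s) − 1/2)` of the Mori family. -/
noncomputable def B (a s : ℝ) : ℝ := Real.sqrt (a * Real.cosh (2 * s) - 1 / 2)

/-- Profile function `A(s) = √(a·cosh(2s) + 1/2)` of the Mori family. -/
noncomputable def A (a s : ℝ) : ℝ := Real.sqrt (a * Real.cosh (2 * s) + 1 / 2)

/-- The constant `K = √(a² − 1/4)`. -/
noncomputable def K (a : ℝ) : ℝ := Real.sqrt (a ^ 2 - 1 / 4)

/-- The angle function `φ(s) = K·∫₀ˢ dt/(A(t)²·B(t))`. -/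
noncomputable def φ (a s : ℝ) : ℝ := K a * ∫ t in (0:ℝ)..s, 1 / ((A a t) ^ 2 * B a t)

/-- The mode-one Jacobi field `f_*(s) = d/ds (A(s)·cosh(φ(s)))`. -/
noncomputable def fstar (a s : ℝ) : ℝ := deriv (fun t => A a t * Real.cosh (φ a t)) s

/-- Squared norm of the second fundamental form, `|II|²(s) = 2·(B''(s)/B(s) − 1)`. -/
noncomputable def IIsq (a s : ℝ) : ℝ := 2 * (deriv (deriv (B a)) s / B a s - 1)

/-- The mode-`k` potential `W_k(s) = |II|²(s) − 2 − k²/B(s)²`. -/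
noncomputable def W (a : ℝ) (k : ℤ) (s : ℝ) : ℝ := IIsq a s - 2 - (k : ℝ) ^ 2 / (B a s) ^ 2

/-- Inverse hyperbolic cosine: `arcosh x = log (x + √(x² − 1))`. -/
noncomputable def arcosh (x : ℝ) : ℝ := Real.log (x + Real.sqrt (x ^ 2 - 1))

/-- The axial boost field `u_*(s) = −a·sinh(2s)/B(s)`. -/
noncomputable def ustar (a s : ℝ) : ℝ := -a * Real.sinh (2 * s) / B a s

/-- The radial quadratic form of mode `k`:
`S_k(u) = ∫_{−s₀}^{s₀} (B·u'² − B·W_k·u²) − coth(r)·B(s₀)·(u(s₀)² + u(−s₀)²)`,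
where `u'` is the derivative of `u` within `[−s₀, s₀]`. -/
noncomputable def Sk (a s₀ r : ℝ) (k : ℤ) (u : ℝ → ℝ) : ℝ :=
  (∫ s in (-s₀)..s₀,
      (B a s * (derivWithin u (Set.Icc (-s₀) s₀) s) ^ 2 - B a s * W a k s * u s ^ 2))
    - Real.cosh r / Real.sinh r * B a s₀ * (u s₀ ^ 2 + u (-s₀) ^ 2)

lemma aux_pos (a : ℝ) (ha : 1 / 2 < a) (s : ℝ) : 0 < a * Real.cosh (2 * s) - 1 / 2 := by
  nlinarith [Real.one_le_cosh (2 * s)]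

lemma aux_B_pos (a : ℝ) (ha : 1 / 2 < a) (s : ℝ) : 0 < B a s :=
  Real.sqrt_pos.2 (aux_pos a ha s)

lemma aux_B_sq (a : ℝ) (ha : 1 / 2 < a) (s : ℝ) :
    B a s ^ 2 = a * Real.cosh (2 * s) - 1 / 2 :=
  Real.sq_sqrt (aux_pos a ha s).le

lemma aux_K_pos (a : ℝ) (ha : 1 / 2 < a) : 0 < K a :=
  Real.sqrt_pos.2 (by nlinarith)

lemma aux_K_sq (a : ℝ) (ha : 1 / 2 < a) : K a ^ 2 = a ^ 2 - 1 / 4 :=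
  Real.sq_sqrt (by nlinarith)

lemma aux_S (a : ℝ) (ha : 1 / 2 < a) (s : ℝ) :
    (a * Real.sinh (2 * s)) ^ 2 = B a s ^ 4 + B a s ^ 2 - K a ^ 2 := by
  have h1 := aux_B_sq a ha s
  have h2 := aux_K_sq a ha
  have h3 := Real.cosh_sq (2 * s)
  have h4 : B a s ^ 4 = (B a s ^ 2) ^ 2 := by ring
  rw [h4, h1, h2]
  linear_combination -a ^ 2 * h3

lemma aux_B_deriv (a : ℝ) (ha : 1 / 2 < a) (s : ℝ) :
    HasDerivAt (B a) (a * Real.sinh (2 * s) / B a s) s := by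
  have h0 : HasDerivAt (fun t : ℝ => 2 * t) 2 s := by
    simpa using (hasDerivAt_id s).const_mul (2 : ℝ)
  have h1 := (((h0.cosh).const_mul a).sub_const (1 / 2)).sqrt (aux_pos a ha s).ne'
  have hB := (aux_B_pos a ha s).ne'
  refine HasDerivAt.congr_deriv (f := B a) h1 ?_
  change _ / (2 * B a s) = _
  field_simp

lemma aux_B_deriv2 (a : ℝ) (ha : 1 / 2 < a) (s : ℝ) :
    HasDerivAt (deriv (B a)) (B a s + K a ^ 2 / B a s ^ 3) s := by
  have e : deriv (B a) = fun t => a * Real.sinh (2 * t) / B a t :=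
    funext fun t => (aux_B_deriv a ha t).deriv
  rw [e]
  have h0 : HasDerivAt (fun t : ℝ => 2 * t) 2 s := by
    simpa using (hasDerivAt_id s).const_mul (2 : ℝ)
  have hB := (aux_B_pos a ha s).ne'
  have h1 := ((h0.sinh).const_mul a).div (aux_B_deriv a ha s) hB
  refine HasDerivAt.congr_deriv h1 ?_
  have hS := aux_S a ha s
  have hq := aux_B_sq a ha s
  field_simp
  linear_combination (-2 * B a s ^ 2) * hq - hS

lemma aux_coth (x : ℝ) (hx : 1 ≤ x) :
    Real.cosh (arcosh x) = x ∧ Real.sinh (arcosh x) = Real.sqrt (x ^ 2 - 1) := by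
  have hq : Real.sqrt (x ^ 2 - 1) ^ 2 = x ^ 2 - 1 := Real.sq_sqrt (by nlinarith)
  have hn := Real.sqrt_nonneg (x ^ 2 - 1)
  have hy : 0 < x + Real.sqrt (x ^ 2 - 1) := by linarith
  rw [arcosh, Real.cosh_eq, Real.sinh_eq, Real.exp_neg, Real.exp_log hy]
  have hi : (x + Real.sqrt (x ^ 2 - 1))⁻¹ = x - Real.sqrt (x ^ 2 - 1) := by
    apply inv_eq_of_mul_eq_one_right
    nlinarith
  rw [hi]
  constructor <;> ring

lemma aux_wronskian (a : ℝ) (ha : 1 / 2 < a)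
    (ψ : ℝ → ℝ) (hψ : ContDiff ℝ 2 ψ)
    (hode : ∀ s : ℝ, deriv (fun t => B a t * deriv ψ t) s
        + B a s * (IIsq a s - 2) * ψ s = 0)
    (hψ0 : ψ 0 = 1 / (2 * K a)) (hψ0' : deriv ψ 0 = 0) (s : ℝ) :
    (B a s * deriv ψ s) * deriv (B a) s
      - ψ s * (B a s * (B a s + K a ^ 2 / B a s ^ 3)) = - a / K a := by
  have hd1 : Differentiable ℝ ψ := hψ.differentiable (by norm_num)
  have hd2 : Differentiable ℝ (deriv ψ) := by
    have : ContDiff ℝ 1 (deriv ψ) := ContDiff.deriv' (n := 1) (by simpa [one_add_one_eq_two] using hψ)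
    exact this.differentiable (by norm_num)
  have key : ∀ t : ℝ, HasDerivAt (fun s => (B a s * deriv ψ s) * deriv (B a) s
      - ψ s * (B a s * (B a s + K a ^ 2 / B a s ^ 3))) 0 t := by
    intro t
    have hB := (aux_B_pos a ha t).ne'
    have hb := aux_B_deriv a ha t
    have hb' : HasDerivAt (B a) (deriv (B a) t) t := by rw [hb.deriv]; exact hb
    have hb2 := aux_B_deriv2 a ha t
    have hp : HasDerivAt (fun t => B a t * deriv ψ t)
        (deriv (fun t => B a t * deriv ψ t) t) t :=
      (hb.differentiableAt.mul (hd2 t)).hasDerivAt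
    have ho := hode t
    have hII : IIsq a t = 2 * K a ^ 2 / B a t ^ 4 := by
      rw [IIsq, hb2.deriv]; field_simp; ring
    rw [hII] at ho
    have ho' := eq_neg_of_add_eq_zero_left ho
    rw [ho'] at hp
    have hc := (hasDerivAt_const t (K a ^ 2)).div (hb'.pow 3) (pow_ne_zero 3 hB)
    have := (hp.mul hb2).sub ((hd1 t).hasDerivAt.mul (hb'.mul (hb'.add hc)))
    refine HasDerivAt.congr_deriv this ?_
    simp
    field_simp
    ring
  have hconst := is_const_of_deriv_eq_zero (fun t => (key t).differentiableAt)
    (fun t => (key t).deriv) s 0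
  refine hconst.trans ?_
  have hB := (aux_B_pos a ha 0).ne'
  have hK := (aux_K_pos a ha).ne'
  have hq := aux_B_sq a ha 0
  have hk := aux_K_sq a ha
  simp only [hψ0, hψ0', mul_zero, zero_mul, Real.cosh_zero] at hq ⊢
  have h4 : B a 0 ^ 4 = (a - 1 / 2) ^ 2 := by
    rw [show B a 0 ^ 4 = (B a 0 ^ 2) ^ 2 by ring, hq]; ring
  field_simp
  rw [h4, hq, hk]
  ring

/-- Robin–Wronskian boundary identity: under the free boundary condition, for a
`C²` solution `ψ` of the mode-zero Jacobi equation with `ψ(0) = 1/(2K)` and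
`ψ'(0) = 0`, one has
`ψ(s₀)·(B(s₀)² − 2K²)/B(s₀)³ − (ψ'(s₀) − coth(r)·ψ(s₀))·u_*(s₀) = −a/(K·B(s₀))`. -/
theorem robin_wronskian_identity (a : ℝ) (ha : 1 / 2 < a) (s₀ : ℝ) (hs₀ : 0 < s₀)
    (hFBC : Real.tanh (φ a s₀) = B a s₀ * K a / (a * Real.sinh (2 * s₀)))
    (r : ℝ) (hr : r = arcosh (A a s₀ * Real.cosh (φ a s₀)))
    (ψ : ℝ → ℝ) (hψ : ContDiff ℝ 2 ψ)
    (hode : ∀ s : ℝ, deriv (fun t => B a t * deriv ψ t) s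
        + B a s * (IIsq a s - 2) * ψ s = 0)
    (hψ0 : ψ 0 = 1 / (2 * K a)) (hψ0' : deriv ψ 0 = 0) :
    ψ s₀ * ((B a s₀ ^ 2 - 2 * K a ^ 2) / B a s₀ ^ 3)
      - (deriv ψ s₀ - Real.cosh r / Real.sinh r * ψ s₀) * ustar a s₀
      = -a / (K a * B a s₀) := by
  have hB := aux_B_pos a ha s₀
  have hK := aux_K_pos a ha
  have hw := aux_wronskian a ha ψ hψ hode hψ0 hψ0' s₀
  rw [(aux_B_deriv a ha s₀).deriv] at hw
  have hS := aux_S a ha s₀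
  have hSpos : 0 < a * Real.sinh (2 * s₀) :=
    mul_pos (by linarith) (Real.sinh_pos_iff.2 (by linarith))
  have hA : A a s₀ ^ 2 = B a s₀ ^ 2 + 1 := by
    rw [aux_B_sq a ha, A, Real.sq_sqrt (by linarith [aux_pos a ha s₀])]; ring
  have hA0 : 0 ≤ A a s₀ := Real.sqrt_nonneg _
  have hA1 : 1 ≤ A a s₀ := by nlinarith
  have hc1 := Real.one_le_cosh (φ a s₀)
  have hx : 1 ≤ A a s₀ * Real.cosh (φ a s₀) := by nlinarith
  obtain ⟨e1, e2⟩ := aux_coth _ hx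
  have hcoth : Real.cosh r / Real.sinh r = a * Real.sinh (2 * s₀) / B a s₀ ^ 2 := by
    rw [hr, e1, e2]
    rw [Real.tanh_eq_sinh_div_cosh, div_eq_div_iff (by linarith) hSpos.ne'] at hFBC
    have hcs := Real.cosh_sq (φ a s₀)
    generalize a * Real.sinh (2 * s₀) = S at *
    generalize Real.cosh (φ a s₀) = c at *
    generalize Real.sinh (φ a s₀) = d at *
    generalize A a s₀ = α at *
    generalize B a s₀ = b at *
    generalize K a = k at *
    have hF2 : (c ^ 2 - 1) * S ^ 2 = b ^ 2 * k ^ 2 * c ^ 2 := by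
      have : d ^ 2 * S ^ 2 = b ^ 2 * k ^ 2 * c ^ 2 := by
        rw [← mul_pow, hFBC]; ring
      rw [← this, hcs]; ring
    have hx2 : (α * c) ^ 2 * (b ^ 2 - k ^ 2) = S ^ 2 := by
      rw [mul_pow, hA]
      linear_combination hF2 - c ^ 2 * hS
    have hm : ((α * c) ^ 2 - 1) * S ^ 2 = (α * c) ^ 2 * b ^ 4 := by
      have : S ^ 2 = b ^ 4 + (b ^ 2 - k ^ 2) := by linarith
      linear_combination (α * c) ^ 2 * this + hx2
    have hsq : Real.sqrt ((α * c) ^ 2 - 1) = α * c * b ^ 2 / S := by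
      rw [Real.sqrt_eq_iff_mul_self_eq (by nlinarith) (by positivity)]
      field_simp
      linear_combination hm
    rw [hsq]
    have : α * c ≠ 0 := by positivity
    have := hB.ne'
    have : α ≠ 0 := by positivity
    have : c ≠ 0 := by positivity
    field_simp
  rw [hcoth, ustar, show -a * Real.sinh (2 * s₀) = -(a * Real.sinh (2 * s₀)) by ring]
  generalize a * Real.sinh (2 * s₀) = S at *
  have hB' := hB.ne'
  have hK' := hK.ne'
  have hw2 : -a / (K a * B a s₀) = (-a / K a) / B a s₀ := by field_simp
  rw [hw2, ← hw]
  field_simp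
  linear_combination (-ψ s₀) * hS

end MoriCatenoid
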